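/- Consider the m-state lamplighter chain on the two-dimensional discrete torus with n vertices (for which the maximal hitting time of the underlying walk is Θ(n·log n) and the expected cover time is Θ(n·log² n)). Then the entropy mixing time satisfies τ_ent = Ω(n·log(n·log m)); that is, there is a constant c′ > 0 such that τ_ent ≥ c′·n·log(n·log m). -/

import Mathlib

open Finset
open scoped Classical

namespace Paper

variable {X : Type} [Fintype X] [DecidableEq X]

/-- `P` is a stochastic matrix. -/
def IsStoch (P : Matrix X X ℝ) : Prop :=
  (∀ x y, 0 ≤ P x y) ∧ ∀ x, ∑ y, P x y = 1

/-- The uniform distribution is stationary for `P` (all columns sum to 1). -/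
def UnifStationary (P : Matrix X X ℝ) : Prop := ∀ y, ∑ x, P x y = 1

/-- Irreducibility of the chain. -/
def Irred (P : Matrix X X ℝ) : Prop := ∀ x y, ∃ n, 0 < (P ^ n) x y

/-- Probability of a trajectory `ω 0, ω 1, …, ω n` under initial distribution `μ`. -/
noncomputable def pathProb (P : Matrix X X ℝ) (μ : X → ℝ) {n : ℕ}
    (ω : Fin (n + 1) → X) : ℝ :=
  μ (ω 0) * ∏ i : Fin n, P (ω i.castSucc) (ω i.succ)

/-- Probability of an event determined by the trajectory up to time `n`. -/
noncomputable def prPath (P : Matrix X X ℝ) (μ : X → ℝ) (n : ℕ)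
    (E : (Fin (n + 1) → X) → Prop) : ℝ :=
  ∑ ω : Fin (n + 1) → X, if E ω then pathProb P μ ω else 0

/-- Expectation of a functional of the trajectory up to time `n`. -/
noncomputable def expPath (P : Matrix X X ℝ) (μ : X → ℝ) (n : ℕ)
    (f : (Fin (n + 1) → X) → ℝ) : ℝ :=
  ∑ ω : Fin (n + 1) → X, pathProb P μ ω * f ω

/-- Point mass at `x`. -/
def delta (x : X) : X → ℝ := fun z => if z = x then 1 else 0

/-- Expected hitting time `E_x[T_y]`, via `E[T] = ∑_{n ≥ 0} Pr(T > n)`. -/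
noncomputable def hitExp (P : Matrix X X ℝ) (x y : X) : ℝ :=
  (∑' n : ℕ, ENNReal.ofReal (prPath P (delta x) n (fun ω => ∀ i, ω i ≠ y))).toReal

/-- Maximal expected hitting time `H = max_{x,y} E_x[T_y]`. -/
noncomputable def maxHit (P : Matrix X X ℝ) : ℝ := ⨆ x, ⨆ y, hitExp P x y

/-- Relaxation time: `max 1/(1-|λ|)` over nontrivial eigenvalues `λ` of `P`. -/
noncomputable def Trel (P : Matrix X X ℝ) : ℝ :=
  sSup ((fun l : ℝ => 1 / (1 - |l|)) '' (spectrum ℝ P \ {1}))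

/-- The set of states not visited by the trajectory `ω` (up to its time horizon). -/
noncomputable def unvisited {n : ℕ} (ω : Fin (n + 1) → X) : Finset X :=
  Finset.univ.filter fun x => ∀ i, ω i ≠ x

/-- `Pr_x(T⁺_x ≥ s)`: the chain started at `x` does not return to `x`
at any time `i` with `1 ≤ i < s`. -/
noncomputable def prReturnGE (P : Matrix X X ℝ) (x : X) (s : ℝ) : ℝ :=
  prPath P (delta x) ⌈s⌉₊
    (fun ω => ∀ i : Fin (⌈s⌉₊ + 1), 1 ≤ (i : ℕ) → ((i : ℕ) : ℝ) < s → ω i ≠ x)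

/-- Separation distance at time `n` from state `x`. -/
noncomputable def sep (P : Matrix X X ℝ) (pi : X → ℝ) (x : X) (n : ℕ) : ℝ :=
  ⨆ y, (1 - (P ^ n) x y / pi y)

/-- Relative entropy `D(μ ‖ pi)` (with `0 log 0 = 0`). -/
noncomputable def relEnt (μ pi : X → ℝ) : ℝ := ∑ x, μ x * Real.log (μ x / pi x)

/-- Total variation distance `d_tv(μ, pi) = ∑_{y : μ y < pi y} (pi y - μ y)`. -/
noncomputable def dtv (μ pi : X → ℝ) : ℝ :=
  ∑ y ∈ Finset.univ.filter (fun y => μ y < pi y), (pi y - μ y)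

/-- Entropy decay (mixing) time. -/
noncomputable def tauEnt (P : Matrix X X ℝ) (pi : X → ℝ) (ε : ℝ) : ℕ :=
  sInf {n' | ∀ n ≥ n', ∀ x, relEnt ((P ^ n) x) pi ≤ ε}

/-- Separation mixing time. -/
noncomputable def tauSep (P : Matrix X X ℝ) (pi : X → ℝ) (ε : ℝ) : ℕ :=
  sInf {n' | ∀ n ≥ n', ∀ x, sep P pi x n ≤ ε}

/-- Total variation mixing time. -/
noncomputable def tauTV (P : Matrix X X ℝ) (pi : X → ℝ) (ε : ℝ) : ℕ :=
  sInf {n' | ∀ n ≥ n', ∀ x, dtv ((P ^ n) x) pi ≤ ε}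

/-- `L²(pi)` distance of `Pᵗ(x,·)` from `pi`. -/
noncomputable def chiDist (P : Matrix X X ℝ) (pi : X → ℝ) (t : ℕ) (x : X) : ℝ :=
  Real.sqrt (∑ y, ((P ^ t) x y / pi y - 1) ^ 2 * pi y)

/-- `L²` mixing time. -/
noncomputable def tau2 (P : Matrix X X ℝ) (pi : X → ℝ) : ℕ :=
  sInf {t | ∀ x, chiDist P pi t x ≤ 1 / 4}

/-- Uniform distribution on a finite type. -/
noncomputable def unif (Y : Type) [Fintype Y] : Y → ℝ := fun _ => (Fintype.card Y : ℝ)⁻¹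

/-- The `m`-state lamplighter chain over a base chain `Pb`:
the lamp at the current position is randomized, the lamplighter moves one step
of the base chain, and the lamp at the new position is randomized. -/
noncomputable def lampChain {V : Type} [Fintype V] [DecidableEq V]
    (Pb : Matrix V V ℝ) (m : ℕ) :
    Matrix ((V → Fin m) × V) ((V → Fin m) × V) ℝ :=
  fun p q =>
    if ∀ z, z ≠ p.2 → z ≠ q.2 → q.1 z = p.1 z then
      Pb p.2 q.2 * ((m : ℝ)⁻¹) ^ (({p.2, q.2} : Finset V).card)
    else 0

/-- Simple random walk on a `d`-regular graph. -/
noncomputable def srw {V : Type} [Fintype V] [DecidableEq V]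
    (G : SimpleGraph V) (d : ℕ) : Matrix V V ℝ :=
  fun x y => if G.Adj x y then (d : ℝ)⁻¹ else 0

/-- Lazy simple random walk on the two-dimensional discrete torus `ZMod k × ZMod k`. -/
noncomputable def torusWalk (k : ℕ) [NeZero k] :
    Matrix (ZMod k × ZMod k) (ZMod k × ZMod k) ℝ :=
  fun x y => (if y = x then 1 / 2 else 0) +
    (if y = (x.1 + 1, x.2) then 1 / 8 else 0) +
    (if y = (x.1 - 1, x.2) then 1 / 8 else 0) +
    (if y = (x.1, x.2 + 1) then 1 / 8 else 0) +
    (if y = (x.1, x.2 - 1) then 1 / 8 else 0)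

/-!
By the Gibbs variational inequality, `∑ x, μ x * f x ≤ D(μ ‖ π)` whenever
`∑ x, π x * exp (f x) ≤ 1`. Start with every lamp in the state `a₀` and let `f` count the lamps in
state `a₀`, weighted by `β` and normalized. A lamp is uniform once its position has been visited and
untouched before that, so the expectation of `f` at time `t` is governed by the expected number `S`
of vertices unvisited by time `t`. With `n` vertices, `β = S / (2 * n)` yields
`S ^ 2 / (8 * n) ≤ D` and `β = log m` yields `S * log m - n ≤ D`.

The walk killed on a vertex is a symmetric matrix whose entries sum to at least `n - 2`, so by
Cauchy–Schwarz its `t`-th power has entries summing to at least `n * (1 - 2 / n) ^ t` for `t` a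
power of two. Hence `n * exp (-6 * t / n) ≤ S` from some starting vertex, and `D` can only be small
once `t` is of order `n * log (n * log m)`.
-/

section NonnegMatrix

open Matrix

variable {ι R : Type*} [Fintype ι] [Ring R] [LinearOrder R]
  {A B : Matrix ι ι R} {i j k : ι}

lemma exists_pos_of_mul_apply_pos (hA : ∀ i j, 0 ≤ A i j) (hB : ∀ i j, 0 ≤ B i j)
    (h : 0 < (A * B) i k) : ∃ j, 0 < A i j ∧ 0 < B j k := by
  by_contra! hne
  rw [mul_apply] at h
  refine h.ne' (Finset.sum_eq_zero fun j _ => ?_)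
  rcases (hA i j).eq_or_lt with hij | hij
  · rw [← hij, zero_mul]
  · rw [(hne j hij).antisymm (hB j k), mul_zero]

variable [IsStrictOrderedRing R]

lemma mul_apply_pos (hA : ∀ i j, 0 ≤ A i j) (hB : ∀ i j, 0 ≤ B i j)
    (hij : 0 < A i j) (hjk : 0 < B j k) : 0 < (A * B) i k := by
  rw [mul_apply]
  exact Finset.sum_pos' (fun l _ => mul_nonneg (hA i l) (hB l k))
    ⟨j, mem_univ j, mul_pos hij hjk⟩

variable [DecidableEq ι]

lemma pow_add_apply_pos (hA : ∀ i j, 0 ≤ A i j) {m n : ℕ}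
    (hij : 0 < (A ^ m) i j) (hjk : 0 < (A ^ n) j k) : 0 < (A ^ (m + n)) i k := by
  rw [pow_add]
  exact mul_apply_pos (pow_apply_nonneg hA m) (pow_apply_nonneg hA n) hij hjk

lemma pow_apply_self_pos (hA : ∀ i j, 0 ≤ A i j) (hi : 0 < A i i) (n : ℕ) :
    0 < (A ^ n) i i := by
  induction n with
  | zero => simp
  | succ n ih => exact pow_add_apply_pos hA ih (by simpa using hi)

lemma isPrimitive_of_isIrreducible_of_diag_pos (hA : A.IsIrreducible)
    (hdiag : ∀ i, 0 < A i i) : A.IsPrimitive := by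
  choose n _ hn using (isIrreducible_iff_exists_pow_pos hA.nonneg).1 hA
  let N := ∑ i, ∑ j, n i j
  have hle (i j : ι) : n i j ≤ N + 1 :=
    ((single_le_sum_of_canonicallyOrdered (f := n i) (mem_univ j)).trans
      (single_le_sum_of_canonicallyOrdered (f := fun i => ∑ j, n i j) (mem_univ i))).trans
      N.le_succ
  refine ⟨hA.nonneg, N + 1, N.succ_pos, fun i j => ?_⟩
  rw [← Nat.add_sub_of_le (hle i j)]
  exact pow_add_apply_pos hA.nonneg (hn i j) (pow_apply_self_pos hA.nonneg (hdiag j) _)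

end NonnegMatrix

section Convergence

open Filter Topology Matrix

lemma tendsto_zero_of_antitone_of_add_le_mul {f : ℕ → ℝ} (hf : Antitone f) (hf0 : ∀ n, 0 ≤ f n)
    {ρ : ℝ} (hρ : ρ < 1) {N : ℕ} (hN : ∀ n, f (n + N) ≤ ρ * f n) : Tendsto f atTop (𝓝 0) := by
  have hlim : Tendsto f atTop (𝓝 (⨅ n, f n)) :=
    tendsto_atTop_ciInf hf ⟨0, Set.forall_mem_range.2 hf0⟩
  have hle : ⨅ n, f n ≤ ρ * ⨅ n, f n :=
    le_of_tendsto_of_tendsto' (hlim.comp (tendsto_add_atTop_nat N)) (hlim.const_mul ρ) hN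
  have h0 : 0 ≤ ⨅ n, f n := le_ciInf hf0
  have : ⨅ n, f n = 0 := by nlinarith
  rwa [this] at hlim

/- Subtracting the constant `δ` from every entry of `M` does not change `w ᵥ* M`, because `w` has
total mass zero; what is left is nonnegative with row sums `1 - card ι * δ`. -/
lemma sum_abs_vecMul_le {ι : Type*} [Fintype ι] [DecidableEq ι] {M : Matrix ι ι ℝ}
    (hM : M ∈ rowStochastic ℝ ι) {δ : ℝ} (hδ : ∀ x y, δ ≤ M x y) {w : ι → ℝ}
    (hw : ∑ x, w x = 0) :
    ∑ y, |(w ᵥ* M) y| ≤ (1 - Fintype.card ι * δ) * ∑ x, |w x| := by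
  have hshift (y : ι) : (w ᵥ* M) y = ∑ x, w x * (M x y - δ) := by
    simp only [vecMul, dotProduct, mul_sub, sum_sub_distrib, ← sum_mul, hw, zero_mul, sub_zero]
  have habs (x y : ι) : |w x * (M x y - δ)| = |w x| * (M x y - δ) := by
    rw [abs_mul, abs_of_nonneg (sub_nonneg.2 (hδ x y))]
  calc ∑ y, |(w ᵥ* M) y| ≤ ∑ y, ∑ x, |w x| * (M x y - δ) := by
        gcongr with y
        rw [hshift]
        exact (abs_sum_le_sum_abs _ _).trans_eq (sum_congr rfl fun x _ => habs x y)
    _ = (1 - Fintype.card ι * δ) * ∑ x, |w x| := by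
        rw [sum_comm, mul_sum]
        refine sum_congr rfl fun x _ => ?_
        rw [← mul_sum, sum_sub_distrib, sum_row_of_mem_rowStochastic hM, sum_const, card_univ,
          nsmul_eq_mul, mul_comm]

lemma sum_unif {Y : Type} [Fintype Y] [Nonempty Y] : ∑ y, unif Y y = 1 := by
  simp [unif]

lemma unif_pos {Y : Type} [Fintype Y] (y : Y) : 0 < unif Y y := by
  have : Nonempty Y := ⟨y⟩
  exact inv_pos.2 (Nat.cast_pos.2 Fintype.card_pos)

variable {P : Matrix X X ℝ}

lemma unif_vecMul (hP : P ∈ doublyStochastic ℝ X) : unif X ᵥ* P = unif X := by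
  ext y
  simp [vecMul, dotProduct, unif, ← mul_sum, sum_col_of_mem_doublyStochastic hP]

lemma tendsto_pow_unif (hP : P ∈ doublyStochastic ℝ X) (hprim : P.IsPrimitive) (x : X) :
    Tendsto (fun n => (P ^ n) x) atTop (𝓝 (unif X)) := by
  have : Nonempty X := ⟨x⟩
  have hpow (n : ℕ) : P ^ n ∈ doublyStochastic ℝ X := pow_mem hP n
  have hrow (n : ℕ) : P ^ n ∈ rowStochastic ℝ X :=
    (mem_doublyStochastic_iff_mem_rowStochastic_and_mem_colStochastic.1 (hpow n)).1
  obtain ⟨N, -, hN⟩ := hprim.exists_pos_pow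
  obtain ⟨⟨x₀, y₀⟩, hmin⟩ := Finite.exists_min fun p : X × X => (P ^ N) p.1 p.2
  let dev (n : ℕ) : X → ℝ := (P ^ n) x - unif X
  have hdev_sum (n : ℕ) : ∑ y, dev n y = 0 := by
    simp [dev, sum_sub_distrib, sum_row_of_mem_doublyStochastic (hpow n), sum_unif]
  have hdev_add (n r : ℕ) : dev (n + r) = dev n ᵥ* P ^ r := by
    rw [sub_vecMul, unif_vecMul (hpow r)]
    simp only [dev, pow_add]
    rfl
  have hanti : Antitone fun n => ∑ y, |dev n y| := antitone_nat_of_succ_le fun n => by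
    rw [hdev_add]
    simpa only [mul_zero, sub_zero, one_mul] using
      sum_abs_vecMul_le (hrow 1) (fun _ _ => nonneg_of_mem_rowStochastic (hrow 1)) (hdev_sum n)
  have hcontr (n : ℕ) : ∑ y, |dev (n + N) y| ≤
      (1 - Fintype.card X * (P ^ N) x₀ y₀) * ∑ y, |dev n y| := by
    rw [hdev_add]
    exact sum_abs_vecMul_le (hrow N) (fun x y => hmin (x, y)) (hdev_sum n)
  have hρ : 1 - Fintype.card X * (P ^ N) x₀ y₀ < 1 :=
    sub_lt_self 1 (mul_pos (Nat.cast_pos.2 Fintype.card_pos) (hN x₀ y₀))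
  have hlim : Tendsto (fun n => ∑ y, |dev n y|) atTop (𝓝 0) :=
    tendsto_zero_of_antitone_of_add_le_mul hanti (fun n => by positivity) hρ hcontr
  refine tendsto_pi_nhds.2 fun y => tendsto_sub_nhds_zero_iff.1 ?_
  exact squeeze_zero_norm
    (fun n => single_le_sum (f := fun y => |dev n y|) (fun _ _ => abs_nonneg _) (mem_univ y)) hlim

end Convergence

section RelativeEntropy

open Filter Topology Matrix

variable {Y : Type} [Fintype Y]

lemma continuous_relEnt {pi : Y → ℝ} (hpi : ∀ x, pi x ≠ 0) :
    Continuous fun μ => relEnt μ pi := by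
  have hrescale (μ : Y → ℝ) (x : Y) :
      μ x * Real.log (μ x / pi x) = pi x * (μ x / pi x * Real.log (μ x / pi x)) := by
    rw [← mul_assoc, mul_div_cancel₀ _ (hpi x)]
  simp only [relEnt, hrescale]
  exact continuous_finsetSum _ fun x _ =>
    (Real.continuous_mul_log.comp ((continuous_apply x).div_const _)).const_mul _

lemma relEnt_self (μ : Y → ℝ) : relEnt μ μ = 0 :=
  sum_eq_zero fun x _ => by by_cases h : μ x = 0 <;> simp [h]

lemma mul_add_sub_mul_exp_le_mul_log_div {a b : ℝ} (ha : 0 ≤ a) (hb : 0 < b) (s : ℝ) :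
    a * s + a - b * Real.exp s ≤ a * Real.log (a / b) := by
  rcases ha.eq_or_lt with rfl | ha
  · simpa using (mul_pos hb (Real.exp_pos s)).le
  have hexp : a * Real.exp (s - Real.log (a / b)) = b * Real.exp s := by
    rw [Real.exp_sub, Real.exp_log (div_pos ha hb)]
    field_simp
  nlinarith [Real.add_one_le_exp (s - Real.log (a / b))]

lemma sum_mul_le_relEnt {μ pi f : Y → ℝ} (hμ : ∀ x, 0 ≤ μ x) (hμ_sum : ∑ x, μ x = 1)
    (hpi : ∀ x, 0 < pi x) (hf : ∑ x, pi x * Real.exp (f x) ≤ 1) :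
    ∑ x, μ x * f x ≤ relEnt μ pi := by
  have hsum := sum_le_sum fun x (_ : x ∈ univ) =>
    mul_add_sub_mul_exp_le_mul_log_div (hμ x) (hpi x) (f x)
  rw [sum_sub_distrib, sum_add_distrib, hμ_sum] at hsum
  rw [relEnt]
  linarith

lemma relEnt_pow_le_of_tauEnt_le {P : Matrix X X ℝ} (hP : P ∈ doublyStochastic ℝ X)
    (hprim : P.IsPrimitive) {ε : ℝ} (hε : 0 < ε) {n : ℕ} (hn : tauEnt P (unif X) ε ≤ n) (x : X) :
    relEnt ((P ^ n) x) (unif X) ≤ ε := by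
  have hlim (x : X) : Tendsto (fun n => relEnt ((P ^ n) x) (unif X)) atTop (𝓝 0) := by
    rw [← relEnt_self (unif X)]
    have hcont : Continuous fun μ => relEnt μ (unif X) :=
      continuous_relEnt fun y => (unif_pos y).ne'
    exact (hcont.tendsto _).comp (tendsto_pow_unif hP hprim x)
  have hmixed : ∃ n', ∀ n ≥ n', ∀ x, relEnt ((P ^ n) x) (unif X) ≤ ε :=
    eventually_atTop.1 (eventually_all.2 fun x => (hlim x).eventually_le_const hε)
  exact Nat.sInf_mem hmixed n hn x

end RelativeEntropy

section KilledWalk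

open Matrix

/- Cauchy–Schwarz gives `(u ⬝ᵥ A ^ t *ᵥ u) ^ 2 ≤ (u ⬝ᵥ u) * (u ⬝ᵥ A ^ (2 * t) *ᵥ u)`, so the lower
bound survives each doubling of the exponent. -/
lemma pow_two_pow_mul_le_dotProduct_mulVec {ι : Type*} [Fintype ι] [DecidableEq ι]
    {A : Matrix ι ι ℝ} (hA : A.IsSymm) {u : ι → ℝ} {r : ℝ} (hr : 0 ≤ r)
    (h : r * (u ⬝ᵥ u) ≤ u ⬝ᵥ A *ᵥ u) (j : ℕ) :
    r ^ 2 ^ j * (u ⬝ᵥ u) ≤ u ⬝ᵥ (A ^ 2 ^ j) *ᵥ u := by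
  induction j with
  | zero => simpa using h
  | succ j ih =>
    set B := A ^ 2 ^ j with hB
    set s := r ^ 2 ^ j with hs
    have hsq : u ⬝ᵥ (B * B) *ᵥ u = (B *ᵥ u) ⬝ᵥ (B *ᵥ u) := by
      rw [← mulVec_mulVec, dotProduct_mulVec, ← mulVec_transpose, (hA.pow _).eq]
    have hcs : (u ⬝ᵥ B *ᵥ u) ^ 2 ≤ (u ⬝ᵥ u) * (u ⬝ᵥ (B * B) *ᵥ u) := by
      rw [hsq]
      simpa only [dotProduct, sq] using sum_mul_sq_le_sq_mul_sq univ u (B *ᵥ u)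
    have hnonneg (v : ι → ℝ) : 0 ≤ v ⬝ᵥ v := sum_nonneg fun i _ => mul_self_nonneg (v i)
    rw [pow_succ, mul_two, pow_add, pow_add, ← hB, ← hs]
    rcases (hnonneg u).eq_or_lt with h0 | hpos
    · rw [← h0, mul_zero, hsq]
      exact hnonneg _
    · have : (s * (u ⬝ᵥ u)) ^ 2 ≤ (u ⬝ᵥ B *ᵥ u) ^ 2 := by gcongr
      nlinarith

variable {V : Type} [DecidableEq V]

/-- The transition matrix of the chain `P` killed on `z`: every transition into or out of `z` is
removed. -/
def killed (P : Matrix V V ℝ) (z : V) : Matrix V V ℝ :=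
  fun x y => if x = z ∨ y = z then 0 else P x y

lemma killed_isSymm {P : Matrix V V ℝ} (hP : P.IsSymm) (z : V) : (killed P z).IsSymm := by
  ext x y
  simp only [transpose_apply, killed, or_comm, hP.apply]

variable [Fintype V]

/-- The probability that the chain `P` started at `x` does not visit `z` at the times `0, …, t`,
provided that `t ≠ 0`. At `t = 0` no transition has been examined and the value is `1`, even for
`x = z`. -/
def avoidProb (P : Matrix V V ℝ) (z : V) (t : ℕ) (x : V) : ℝ :=
  ((killed P z ^ t) *ᵥ 1) x

/-- The expected number of states that the chain `P` started at `x` has not visited by time `t`,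
with the convention of `avoidProb` at `t = 0`. -/
def meanUnvisited (P : Matrix V V ℝ) (t : ℕ) (x : V) : ℝ :=
  ∑ z, avoidProb P z t x

lemma meanUnvisited_zero (P : Matrix V V ℝ) (x : V) : meanUnvisited P 0 x = Fintype.card V := by
  simp [meanUnvisited, avoidProb]

variable {P : Matrix V V ℝ}

lemma avoidProb_mem_Icc (hP : P ∈ rowStochastic ℝ V) (z : V) (t : ℕ) (x : V) :
    avoidProb P z t x ∈ Set.Icc 0 1 := by
  have hkilled (x y : V) : 0 ≤ killed P z x y ∧ killed P z x y ≤ P x y := by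
    have := nonneg_of_mem_rowStochastic hP (i := x) (j := y)
    unfold killed
    split_ifs <;> simp [this]
  induction t generalizing x with
  | zero => simp [avoidProb]
  | succ t ih =>
    have hstep : avoidProb P z (t + 1) x = ∑ y, killed P z x y * avoidProb P z t y := by
      rw [avoidProb, pow_succ', ← mulVec_mulVec]
      rfl
    rw [hstep]
    refine ⟨sum_nonneg fun y _ => mul_nonneg (hkilled x y).1 (ih y).1, ?_⟩
    rw [← sum_row_of_mem_rowStochastic hP x]
    refine sum_le_sum fun y _ => ?_
    exact (mul_le_of_le_one_right (hkilled x y).1 (ih y).2).trans (hkilled x y).2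

lemma meanUnvisited_mem_Icc (hP : P ∈ rowStochastic ℝ V) (t : ℕ) (x : V) :
    meanUnvisited P t x ∈ Set.Icc 0 (Fintype.card V : ℝ) := by
  refine ⟨sum_nonneg fun z _ => (avoidProb_mem_Icc hP z t x).1, ?_⟩
  simpa [meanUnvisited] using sum_le_card_nsmul univ (fun z => avoidProb P z t x) 1
    fun z _ => (avoidProb_mem_Icc hP z t x).2

lemma card_sub_two_le_killed (hP : P ∈ doublyStochastic ℝ V) (z : V) :
    (Fintype.card V : ℝ) - 2 ≤ 1 ⬝ᵥ killed P z *ᵥ 1 := by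
  have hentry (x y : V) :
      P x y - (if x = z then P x y else 0) - (if y = z then P x y else 0) ≤ killed P z x y := by
    have := nonneg_of_mem_doublyStochastic hP (i := x) (j := y)
    unfold killed
    split_ifs <;> simp_all
  have hrow (x : V) : 1 - (if x = z then 1 else 0) - P x z ≤ (killed P z *ᵥ 1) x := by
    have := sum_le_sum fun y (_ : y ∈ univ) => hentry x y
    simpa [mulVec, dotProduct, sum_sub_distrib, sum_row_of_mem_doublyStochastic hP] using this
  have := sum_le_sum fun x (_ : x ∈ univ) => hrow x
  simp only [sum_sub_distrib, sum_const, card_univ, nsmul_eq_mul, mul_one, sum_ite_eq', mem_univ,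
    if_true, sum_col_of_mem_doublyStochastic hP] at this
  rw [one_dotProduct]
  linarith

lemma exp_neg_six_div_le_one_sub_two_div {n : ℝ} (hn : 3 ≤ n) :
    Real.exp (-(6 / n)) ≤ 1 - 2 / n := by
  have hpos : 0 < 1 - 2 / n := by
    rw [sub_pos, div_lt_one (by positivity)]
    linarith
  have hinv : (1 - 2 / n)⁻¹ ≤ 1 + 6 / n := by
    rw [inv_le_comm₀ hpos (by positivity), inv_le_iff_one_le_mul₀ (by positivity)]
    have : (1 - 2 / n) * (1 + 6 / n) = 1 + 4 * (n - 3) / n ^ 2 := by field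
    have : 0 ≤ 4 * (n - 3) / n ^ 2 := by
      have := sub_nonneg.2 hn
      positivity
    linarith
  rw [← Real.le_log_iff_exp_le hpos]
  linarith [Real.one_sub_inv_le_log_of_pos hpos]

lemma exists_card_mul_exp_le_meanUnvisited (hP : P ∈ doublyStochastic ℝ V) (hsymm : P.IsSymm)
    (hcard : 3 ≤ Fintype.card V) (j : ℕ) :
    ∃ x, Fintype.card V * Real.exp (-(6 * 2 ^ j / Fintype.card V)) ≤ meanUnvisited P (2 ^ j) x := by
  set n : ℝ := (Fintype.card V : ℝ) with hn
  have hn3 : 3 ≤ n := by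
    rw [hn]
    exact_mod_cast hcard
  have hexp : Real.exp (-(6 * 2 ^ j / n)) = Real.exp (-(6 / n)) ^ 2 ^ j := by
    rw [← Real.exp_nat_mul]
    push_cast
    ring_nf
  have hone : (1 : V → ℝ) ⬝ᵥ 1 = n := by simp [hn]
  have hkilled (z : V) : Real.exp (-(6 / n)) * ((1 : V → ℝ) ⬝ᵥ 1) ≤ 1 ⬝ᵥ killed P z *ᵥ 1 := by
    calc Real.exp (-(6 / n)) * ((1 : V → ℝ) ⬝ᵥ 1) ≤ (1 - 2 / n) * n := by
          rw [hone]
          gcongr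
          exact exp_neg_six_div_le_one_sub_two_div hn3
      _ = n - 2 := by field
      _ ≤ _ := card_sub_two_le_killed hP z
  have havoid (z : V) : Real.exp (-(6 * 2 ^ j / n)) * n ≤ ∑ x, avoidProb P z (2 ^ j) x := by
    have := pow_two_pow_mul_le_dotProduct_mulVec (killed_isSymm hsymm z) (Real.exp_nonneg _)
      (hkilled z) j
    rwa [hone, ← hexp, one_dotProduct] at this
  have : Nonempty V := Fintype.card_pos_iff.1 (by omega)
  obtain ⟨x, -, hx⟩ := exists_le_of_sum_le (s := univ) univ_nonempty
    (f := fun _ => n * Real.exp (-(6 * 2 ^ j / n))) (g := meanUnvisited P (2 ^ j)) <| by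
      simp only [meanUnvisited]
      rw [sum_comm]
      refine sum_le_sum fun z _ => ?_
      simpa only [mul_comm] using havoid z
  exact ⟨x, hx⟩

end KilledWalk

section Lamplighter

open Matrix

lemma sum_prod_mul_apply {ι κ R : Type*} [Fintype ι] [DecidableEq ι] [Fintype κ] [CommSemiring R]
    {w : ι → κ → R} (hw : ∀ i, ∑ a, w i a = 1) (i₀ : ι) (g : κ → R) :
    ∑ f : ι → κ, (∏ i, w i (f i)) * g (f i₀) = ∑ a, w i₀ a * g a := by
  have hprod (f : ι → κ) : (∏ i, w i (f i)) * g (f i₀) =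
      ∏ i, w i (f i) * if i = i₀ then g (f i) else 1 := by
    rw [prod_mul_distrib, Fintype.prod_ite_eq']
  simp only [hprod]
  rw [← Fintype.prod_sum fun i a => w i a * if i = i₀ then g a else 1,
    Fintype.prod_eq_single i₀ fun i hi => by simp [hi, hw]]
  simp

variable {V : Type} [DecidableEq V] {m : ℕ}

/-- The law of the lamp at `v` after the lamps in `s` of the configuration `l` are randomized. -/
noncomputable def lampLaw (s : Finset V) (l : V → Fin m) (v : V) (a : Fin m) : ℝ :=
  if v ∈ s then (m : ℝ)⁻¹ else if a = l v then 1 else 0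

lemma sum_lampLaw [NeZero m] (s : Finset V) (l : V → Fin m) (v : V) :
    ∑ a, lampLaw s l v a = 1 := by
  by_cases hv : v ∈ s <;> simp [lampLaw, hv]

variable [Fintype V] {P : Matrix V V ℝ}

lemma lampChain_apply (l l' : V → Fin m) (x y : V) :
    lampChain P m (l, x) (l', y) = P x y * ∏ v, lampLaw {x, y} l v (l' v) := by
  unfold lampChain
  split_ifs with h
  · have hlaw (v : V) :
        lampLaw {x, y} l v (l' v) = if v ∈ ({x, y} : Finset V) then (m : ℝ)⁻¹ else 1 := by
      unfold lampLaw
      split_ifs <;> simp_all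
    simp only [hlaw, Fintype.prod_ite_mem, prod_const]
  · push Not at h
    obtain ⟨v, hvx, hvy, hv⟩ := h
    rw [prod_eq_zero (mem_univ v) (by simp_all [lampLaw]), mul_zero]

lemma lampChain_transpose (P : Matrix V V ℝ) (m : ℕ) : (lampChain P m)ᵀ = lampChain Pᵀ m := by
  ext p q
  simp only [transpose_apply, lampChain, pair_comm, eq_comm, imp.swap]

lemma lampChain_nonneg (hP : ∀ x y, 0 ≤ P x y) (p q : (V → Fin m) × V) : 0 ≤ lampChain P m p q := by
  have := hP p.2 q.2
  unfold lampChain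
  positivity

variable [NeZero m]

lemma sum_lampChain_mul (P : Matrix V V ℝ) (l : V → Fin m) (x z : V) (f : Fin m → V → ℝ) :
    ∑ q, lampChain P m (l, x) q * f (q.1 z) q.2 =
      ∑ y, P x y * ∑ a, lampLaw {x, y} l z a * f a y := by
  rw [Fintype.sum_prod_type_right]
  refine sum_congr rfl fun y _ => ?_
  simp only [lampChain_apply, mul_assoc, ← mul_sum]
  rw [sum_prod_mul_apply (sum_lampLaw _ l) z fun a => f a y]

lemma lampChain_mem_rowStochastic (hP : P ∈ rowStochastic ℝ V) :
    lampChain P m ∈ rowStochastic ℝ ((V → Fin m) × V) := by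
  refine mem_rowStochastic_iff_sum.2
    ⟨lampChain_nonneg fun _ _ => nonneg_of_mem_rowStochastic hP, fun ⟨l, x⟩ => ?_⟩
  simpa [sum_lampLaw, sum_row_of_mem_rowStochastic hP] using
    sum_lampChain_mul P l x x fun _ _ => 1

lemma lampChain_mem_doublyStochastic (hP : P ∈ doublyStochastic ℝ V) :
    lampChain P m ∈ doublyStochastic ℝ ((V → Fin m) × V) := by
  obtain ⟨hrow, hcol⟩ := mem_doublyStochastic_iff_mem_rowStochastic_and_mem_colStochastic.1 hP
  refine mem_doublyStochastic_iff_mem_rowStochastic_and_mem_colStochastic.2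
    ⟨lampChain_mem_rowStochastic hrow, ?_⟩
  rw [← transpose_mem_rowStochastic_iff_mem_colStochastic, lampChain_transpose]
  exact lampChain_mem_rowStochastic (transpose_mem_rowStochastic_iff_mem_colStochastic.2 hcol)

/- A lamp whose position the walk touches is uniform, so a centred function of it averages to `0`:
the lamplighter chain acts on such functions through the killed walk. -/
lemma lampChain_mulVec_centred {h : Fin m → ℝ} (hh : ∑ a, h a = 0) (P : Matrix V V ℝ) (z : V)
    (u : V → ℝ) :
    lampChain P m *ᵥ (fun q => h (q.1 z) * u q.2) =
      fun p => h (p.1 z) * (killed P z *ᵥ u) p.2 := by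
  ext ⟨l, x⟩
  refine (sum_lampChain_mul P l x z fun a y => h a * u y).trans ?_
  simp only [mulVec, dotProduct, mul_sum]
  refine sum_congr rfl fun y _ => ?_
  rw [← mul_sum]
  by_cases hz : z = x ∨ z = y
  · have hlaw (a : Fin m) : lampLaw {x, y} l z a = (m : ℝ)⁻¹ := by simp [lampLaw, hz]
    have hkilled : killed P z x y = 0 := by simp [killed, eq_comm, hz]
    simp only [hlaw, ← mul_sum, ← sum_mul, hh, hkilled, zero_mul, mul_zero]
  · have hlaw (a : Fin m) : lampLaw {x, y} l z a = if a = l z then 1 else 0 := by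
      simp [lampLaw, hz]
    have hkilled : killed P z x y = P x y := by simp [killed, eq_comm, hz]
    simp only [hlaw, hkilled, ite_mul, one_mul, zero_mul, sum_ite_eq', mem_univ, if_true]
    ring

lemma lampChain_pow_mulVec_centred {h : Fin m → ℝ} (hh : ∑ a, h a = 0) (P : Matrix V V ℝ) (z : V)
    (t : ℕ) :
    (lampChain P m ^ t) *ᵥ (fun q => h (q.1 z)) = fun p => h (p.1 z) * avoidProb P z t p.2 := by
  induction t with
  | zero => simp [avoidProb]
  | succ t ih =>
    rw [pow_succ', ← mulVec_mulVec, ih, lampChain_mulVec_centred hh]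
    simp only [avoidProb, pow_succ', ← mulVec_mulVec]
    rfl

lemma lampChain_pow_mulVec_lamp (hP : P ∈ rowStochastic ℝ V) (g : Fin m → ℝ) (z : V) (t : ℕ)
    (l : V → Fin m) (x : V) :
    ((lampChain P m ^ t) *ᵥ fun q => g (q.1 z)) (l, x) =
      (∑ a, g a) / m + (g (l z) - (∑ a, g a) / m) * avoidProb P z t x := by
  set avg := (∑ a, g a) / m with havg
  have hcentred : ∑ a, (g a - avg) = 0 := by
    simp [havg, sum_sub_distrib, mul_div_cancel₀ _ (NeZero.ne (m : ℝ))]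
  have hsplit : (fun q : (V → Fin m) × V => g (q.1 z)) =
      avg • 1 + fun q => g (q.1 z) - avg := by
    ext q
    simp
  rw [hsplit, mulVec_add, mulVec_smul,
    one_vecMul_of_mem_rowStochastic (pow_mem (lampChain_mem_rowStochastic hP) t),
    lampChain_pow_mulVec_centred hcentred]
  simp

lemma lampChain_apply_pos {x y : V} (hxy : 0 < P x y) {l l' : V → Fin m}
    (hl : ∀ v, v ≠ x → v ≠ y → l' v = l v) : 0 < lampChain P m (l, x) (l', y) := by
  have hm : (0 : ℝ) < m := Nat.cast_pos.2 (NeZero.pos m)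
  rw [lampChain, if_pos hl]
  positivity

lemma lampChain_pow_apply_pos (hP : ∀ x y, 0 ≤ P x y) {n : ℕ} {x y : V} (hxy : 0 < (P ^ n) x y)
    (l : V → Fin m) : 0 < (lampChain P m ^ n) (l, x) (l, y) := by
  induction n generalizing y with
  | zero =>
    obtain rfl : x = y := by
      by_contra hne
      simp [hne] at hxy
    simp
  | succ n ih =>
    rw [pow_succ] at hxy ⊢
    obtain ⟨w, hxw, hwy⟩ := exists_pos_of_mul_apply_pos (pow_apply_nonneg hP n) hP hxy
    exact mul_apply_pos (pow_apply_nonneg (lampChain_nonneg hP) n) (lampChain_nonneg hP) (ih hxw)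
      (lampChain_apply_pos hwy fun _ _ _ => rfl)

lemma lampChain_pow_succ_apply_update_pos (hP : ∀ x y, 0 ≤ P x y) {n : ℕ} {x y : V}
    (hxy : 0 < (P ^ (n + 1)) x y) (l : V → Fin m) (a : Fin m) :
    0 < (lampChain P m ^ (n + 1)) (l, x) (Function.update l y a, y) := by
  rw [pow_succ] at hxy ⊢
  obtain ⟨w, hxw, hwy⟩ := exists_pos_of_mul_apply_pos (pow_apply_nonneg hP n) hP hxy
  exact mul_apply_pos (pow_apply_nonneg (lampChain_nonneg hP) n) (lampChain_nonneg hP)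
    (lampChain_pow_apply_pos hP hxw l)
    (lampChain_apply_pos hwy fun v _ hvy => Function.update_of_ne hvy a l)

lemma lampChain_isPrimitive (hP : P.IsPrimitive) : (lampChain P m).IsPrimitive := by
  obtain ⟨hnonneg, N, hN, hpow⟩ := hP
  obtain ⟨N, rfl⟩ := Nat.exists_eq_add_one.2 hN
  have hset (s : Finset V) : ∀ (l l' : V → Fin m) (x y : V), (∀ v ∉ s, l' v = l v) →
      0 < (lampChain P m ^ ((N + 1) * (s.card + 1))) (l, x) (l', y) := by
    induction s using Finset.induction_on with
    | empty =>
      intro l l' x y hl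
      obtain rfl : l' = l := funext fun v => hl v (notMem_empty v)
      simpa using lampChain_pow_apply_pos hnonneg (hpow x y) l'
    | insert z s hz ih =>
      intro l l' x y hl
      rw [card_insert_of_notMem hz, mul_add_one _ (s.card + 1), add_comm]
      refine pow_add_apply_pos (lampChain_nonneg hnonneg)
        (lampChain_pow_succ_apply_update_pos hnonneg (hpow x z) l (l' z))
        (ih _ _ _ _ fun v hv => ?_)
      rcases eq_or_ne v z with rfl | hvz
      · simp
      · rw [Function.update_of_ne hvz, hl v (by simp [hvz, hv])]
  exact ⟨lampChain_nonneg hnonneg, (N + 1) * (#univ + 1), by positivity, fun p q =>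
    hset univ p.1 q.1 p.2 q.2 fun v hv => absurd (mem_univ v) hv⟩

lemma sum_unif_mul_exp_sum_le_one {φ : Fin m → ℝ} (hφ : ∑ a, Real.exp (φ a) ≤ m) :
    ∑ q, unif ((V → Fin m) × V) q * Real.exp (∑ z, φ (q.1 z)) ≤ 1 := by
  have hprod : ∑ l : V → Fin m, Real.exp (∑ z, φ (l z)) ≤ m ^ Fintype.card V := by
    simp only [Real.exp_sum]
    rw [← Fintype.prod_sum fun _ a => Real.exp (φ a), prod_const, card_univ]
    gcongr
  simp only [unif, ← mul_sum]
  refine inv_mul_le_one_of_le₀ ?_ (Nat.cast_nonneg _)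
  rw [Fintype.sum_prod_type_right, Fintype.card_prod, Fintype.card_fun, Fintype.card_fin, mul_comm]
  push_cast
  simpa using mul_le_mul_of_nonneg_left hprod (Nat.cast_nonneg (Fintype.card V))

lemma sum_lamp_le_relEnt_lampChain_pow (hP : P ∈ rowStochastic ℝ V) {φ : Fin m → ℝ}
    (hφ : ∑ a, Real.exp (φ a) ≤ m) (t : ℕ) (l : V → Fin m) (x : V) :
    ∑ z, ((∑ a, φ a) / m + (φ (l z) - (∑ a, φ a) / m) * avoidProb P z t x) ≤
      relEnt ((lampChain P m ^ t) (l, x)) (unif _) := by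
  have hstoch := pow_mem (lampChain_mem_rowStochastic (m := m) hP) t
  have hexpect := sum_mul_le_relEnt (fun q => nonneg_of_mem_rowStochastic hstoch)
    (sum_row_of_mem_rowStochastic hstoch (l, x)) unif_pos (sum_unif_mul_exp_sum_le_one hφ)
  simp only [mul_sum] at hexpect
  rw [sum_comm] at hexpect
  simp only [← lampChain_pow_mulVec_lamp hP]
  exact hexpect

lemma sum_exp_indicator_sub_le (a₀ : Fin m) (β : ℝ) :
    ∑ a, Real.exp ((if a = a₀ then β else 0) - (Real.exp β - 1) / m) ≤ m := by
  have hm : (0 : ℝ) < m := Nat.cast_pos.2 (NeZero.pos m)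
  set δ := (Real.exp β - 1) / m with hδ
  have hsum : ∑ a : Fin m, Real.exp (if a = a₀ then β else 0) = m * (δ + 1) := by
    have hentry (a : Fin m) : Real.exp (if a = a₀ then β else 0) =
        1 + if a = a₀ then Real.exp β - 1 else 0 := by
      split_ifs <;> simp
    simp only [hentry, sum_add_distrib, sum_ite_eq', mem_univ, if_true, sum_const, card_univ,
      Fintype.card_fin, nsmul_eq_mul, hδ]
    field
  simp only [Real.exp_sub, ← sum_div, hsum]
  rw [div_le_iff₀ (Real.exp_pos δ)]
  gcongr
  exact Real.add_one_le_exp δ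

lemma mul_meanUnvisited_sub_le_relEnt (hP : P ∈ rowStochastic ℝ V) (a₀ : Fin m) (β : ℝ) (t : ℕ)
    (x : V) :
    β * (Fintype.card V / m + (1 - 1 / m) * meanUnvisited P t x) -
        Fintype.card V * (Real.exp β - 1) / m ≤
      relEnt ((lampChain P m ^ t) (fun _ => a₀, x)) (unif _) := by
  refine le_trans (le_of_eq ?_)
    (sum_lamp_le_relEnt_lampChain_pow hP (sum_exp_indicator_sub_le a₀ β) t (fun _ => a₀) x)
  have hm : (m : ℝ) ≠ 0 := NeZero.ne _
  simp only [sum_add_distrib, sum_sub_distrib, sum_const, sum_ite_eq', mem_univ, if_true, card_univ,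
    Fintype.card_fin, nsmul_eq_mul, ← mul_sum, meanUnvisited]
  field

lemma meanUnvisited_sq_div_le_relEnt (hP : P ∈ rowStochastic ℝ V) (hm : 2 ≤ m) (a₀ : Fin m)
    (t : ℕ) (x : V) :
    meanUnvisited P t x ^ 2 / (8 * Fintype.card V) ≤
      relEnt ((lampChain P m ^ t) (fun _ => a₀, x)) (unif _) := by
  set n : ℝ := (Fintype.card V : ℝ)
  set S := meanUnvisited P t x
  obtain ⟨hS0, hSn⟩ : 0 ≤ S ∧ S ≤ n := meanUnvisited_mem_Icc hP t x
  have hnpos : 0 < n := Nat.cast_pos.2 (Fintype.card_pos_iff.2 ⟨x⟩)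
  have hm2 : (2 : ℝ) ≤ m := by exact_mod_cast hm
  set β := S / (2 * n) with hβ
  have hβS : S = 2 * n * β := by rw [hβ]; field
  have hβ0 : 0 ≤ β := by positivity
  have hβ1 : β ≤ 1 := by rw [hβ, div_le_one (by positivity)]; linarith
  have hexp : Real.exp β - 1 ≤ β + β ^ 2 := by
    have := (abs_le.1 (Real.abs_exp_sub_one_sub_id_le (by rwa [abs_of_nonneg hβ0]))).2
    linarith
  calc S ^ 2 / (8 * n) = n * β ^ 2 / 2 := by rw [hβS]; field
    _ ≤ n * β ^ 2 * (2 - 3 / m) := by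
        have : 3 / (m : ℝ) ≤ 3 / 2 := by gcongr
        have := mul_nonneg hnpos.le (sq_nonneg β)
        nlinarith
    _ = β * (n / m + (1 - 1 / m) * S) - n * (β + β ^ 2) / m := by rw [hβS]; field
    _ ≤ β * (n / m + (1 - 1 / m) * S) - n * (Real.exp β - 1) / m := by gcongr
    _ ≤ _ := mul_meanUnvisited_sub_le_relEnt hP a₀ β t x

lemma meanUnvisited_mul_log_sub_card_le_relEnt (hP : P ∈ rowStochastic ℝ V) (a₀ : Fin m)
    (t : ℕ) (x : V) :
    meanUnvisited P t x * Real.log m - Fintype.card V ≤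
      relEnt ((lampChain P m ^ t) (fun _ => a₀, x)) (unif _) := by
  refine le_trans ?_ (mul_meanUnvisited_sub_le_relEnt hP a₀ (Real.log m) t x)
  have hm : (0 : ℝ) < m := Nat.cast_pos.2 (NeZero.pos m)
  have hgap : 0 ≤ (Fintype.card V - meanUnvisited P t x) * Real.log m / m :=
    div_nonneg (mul_nonneg (sub_nonneg.2 (meanUnvisited_mem_Icc hP t x).2)
      (Real.log_natCast_nonneg m)) hm.le
  have hcard : 0 ≤ (Fintype.card V : ℝ) / m := by positivity
  rw [Real.exp_log hm, ← sub_nonneg]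
  convert add_nonneg hgap hcard using 1
  field

end Lamplighter

section Torus

open Matrix

variable (k : ℕ) [NeZero k]

lemma torusWalk_mem_rowStochastic : torusWalk k ∈ rowStochastic ℝ (ZMod k × ZMod k) := by
  refine mem_rowStochastic_iff_sum.2 ⟨fun x y => by unfold torusWalk; positivity, fun x => ?_⟩
  simp only [torusWalk, sum_add_distrib, sum_ite_eq', mem_univ, if_true]
  norm_num

lemma torusWalk_isSymm : (torusWalk k).IsSymm := by
  ext ⟨a, b⟩ ⟨c, d⟩
  simp only [transpose_apply, torusWalk, Prod.mk.injEq, eq_comm (a := a), eq_comm (a := b),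
    eq_sub_iff_add_eq, sub_eq_iff_eq_add]
  ring

lemma torusWalk_self_pos (x : ZMod k × ZMod k) : 0 < torusWalk k x x := by
  rw [torusWalk, if_pos rfl]
  positivity

lemma torusWalk_pow_add_fst_pos (i : ℕ) (a b : ZMod k) :
    0 < (torusWalk k ^ i) (a, b) (a + i, b) := by
  induction i with
  | zero => simp
  | succ i ih =>
    have hstep : 0 < (torusWalk k ^ 1) (a + i, b) (a + i + 1, b) := by
      simp only [pow_one, torusWalk, if_true]
      positivity
    rw [Nat.cast_succ, ← add_assoc]
    exact pow_add_apply_pos (fun _ _ => nonneg_of_mem_rowStochastic (torusWalk_mem_rowStochastic k))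
      ih hstep

lemma torusWalk_pow_add_snd_pos (i : ℕ) (a b : ZMod k) :
    0 < (torusWalk k ^ i) (a, b) (a, b + i) := by
  induction i with
  | zero => simp
  | succ i ih =>
    have hstep : 0 < (torusWalk k ^ 1) (a, b + i) (a, b + i + 1) := by
      simp only [pow_one, torusWalk, if_true]
      positivity
    rw [Nat.cast_succ, ← add_assoc]
    exact pow_add_apply_pos (fun _ _ => nonneg_of_mem_rowStochastic (torusWalk_mem_rowStochastic k))
      ih hstep

lemma torusWalk_isPrimitive : (torusWalk k).IsPrimitive := by
  have hnonneg (x y) : 0 ≤ torusWalk k x y :=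
    nonneg_of_mem_rowStochastic (torusWalk_mem_rowStochastic k)
  refine isPrimitive_of_isIrreducible_of_diag_pos
    ((isIrreducible_iff_exists_pow_pos hnonneg).2 fun (a, b) (c, d) => ?_) (torusWalk_self_pos k)
  have hfst := torusWalk_pow_add_fst_pos k (c - a).val a b
  have hsnd := torusWalk_pow_add_snd_pos k (d - b).val c b
  rw [ZMod.natCast_zmod_val, add_sub_cancel] at hfst hsnd
  exact ⟨_, Nat.succ_pos _, pow_add_apply_pos hnonneg (pow_add_apply_pos hnonneg hfst hsnd)
    (pow_apply_self_pos hnonneg (torusWalk_self_pos k _) 1)⟩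

end Torus

section MainTheorem

open Matrix

lemma le_twelve_mul_of_le_exp_sq {n T : ℝ} (hT : 1 ≤ T)
    (h : n ≤ 4 * Real.exp (6 * T / n) ^ 2) : n ≤ 12 * T := by
  by_contra! hlt
  have hexp : Real.exp (6 * T / n) ^ 2 ≤ Real.exp 1 := by
    rw [← Real.exp_nat_mul, Real.exp_le_exp, mul_div_assoc', div_le_one (by linarith)]
    push_cast
    linarith
  linarith [Real.exp_one_lt_d9]

/- With `w = exp (6 * T / n)` the hypotheses give `n ≤ S * w`, hence `n ≤ 4 * w ^ 2`, `L ≤ 2 * w`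
and `n * L ≤ 8 * w ^ 3`. -/
lemma mul_log_le_of_mul_exp_neg_le {n L S T : ℝ} (hn : 1 ≤ n) (hL : 0 < L) (hT : 1 ≤ T)
    (hS : n * Real.exp (-(6 * T / n)) ≤ S) (hsq : S ^ 2 ≤ 4 * n) (hSL : S * L ≤ n + 1 / 2) :
    n * Real.log (n * L) ≤ 54 * T := by
  have hn0 : 0 < n := by linarith
  set w := Real.exp (6 * T / n) with hw
  have hw0 : 0 < w := Real.exp_pos _
  have hnS : n ≤ S * w := by
    rwa [Real.exp_neg, ← hw, ← div_eq_mul_inv, div_le_iff₀ hw0] at hS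
  have hnw : n ≤ 4 * w ^ 2 := by
    refine le_of_mul_le_mul_left ?_ hn0
    calc n * n = n ^ 2 := (sq n).symm
      _ ≤ (S * w) ^ 2 := by gcongr
      _ = S ^ 2 * w ^ 2 := mul_pow S w 2
      _ ≤ 4 * n * w ^ 2 := by gcongr
      _ = n * (4 * w ^ 2) := by ring
  have hnLw : n * L ≤ 8 * w ^ 3 := by
    calc n * L ≤ S * w * L := by gcongr
      _ = S * L * w := by ring
      _ ≤ (n + 1 / 2) * w := by gcongr
      _ ≤ 2 * n * w := by gcongr; linarith
      _ ≤ 2 * (4 * w ^ 2) * w := by gcongr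
      _ = 8 * w ^ 3 := by ring
  have hnT : n ≤ 12 * T := le_twelve_mul_of_le_exp_sq hT hnw
  have hlog8 : Real.log 8 ≤ 3 := by
    rw [show (8 : ℝ) = 2 ^ 3 by norm_num, Real.log_pow]
    push_cast
    linarith [Real.log_two_lt_d9]
  have hlog : Real.log (n * L) ≤ 3 + 18 * T / n := by
    calc Real.log (n * L) ≤ Real.log (8 * w ^ 3) := Real.log_le_log (mul_pos hn0 hL) hnLw
      _ = Real.log 8 + 18 * T / n := by
          rw [Real.log_mul (by norm_num) (by positivity), Real.log_pow, hw, Real.log_exp]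
          push_cast
          ring
      _ ≤ 3 + 18 * T / n := by gcongr
  calc n * Real.log (n * L) ≤ n * (3 + 18 * T / n) := by gcongr
    _ = 3 * n + 18 * T := by field
    _ ≤ 54 * T := by linarith

lemma inv_exp_one_lt : (Real.exp 1)⁻¹ < 3 / 8 := by
  rw [inv_lt_comm₀ (Real.exp_pos 1) (by norm_num)]
  linarith [Real.exp_one_gt_d9]

variable {V : Type} [Fintype V] [DecidableEq V] {P : Matrix V V ℝ} {m : ℕ}

lemma one_le_tauEnt_lampChain (hP : P ∈ doublyStochastic ℝ V) (hprim : P.IsPrimitive)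
    (hcard : 3 ≤ Fintype.card V) (hm : 2 ≤ m) :
    1 ≤ tauEnt (lampChain P m) (unif ((V → Fin m) × V)) (Real.exp 1)⁻¹ := by
  have : NeZero m := ⟨by omega⟩
  have hn : (3 : ℝ) ≤ Fintype.card V := by exact_mod_cast hcard
  obtain ⟨x⟩ : Nonempty V := Fintype.card_pos_iff.1 (by omega)
  have hrow := (mem_doublyStochastic_iff_mem_rowStochastic_and_mem_colStochastic.1 hP).1
  by_contra! hτ
  have hlower := meanUnvisited_sq_div_le_relEnt hrow hm 0 0 x
  have hupper := relEnt_pow_le_of_tauEnt_le (lampChain_mem_doublyStochastic hP)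
    (lampChain_isPrimitive hprim) (inv_pos.2 (Real.exp_pos 1)) (Nat.lt_one_iff.1 hτ).le
    (fun _ => 0, x)
  have hinit : meanUnvisited P 0 x ^ 2 / (8 * Fintype.card V) = (Fintype.card V : ℝ) / 8 := by
    rw [meanUnvisited_zero]
    field
  linarith [inv_exp_one_lt]

theorem lamplighter_torus_entropy_lower_general (hP : P ∈ rowStochastic ℝ V) (hsymm : P.IsSymm)
    (hprim : P.IsPrimitive) (hcard : 3 ≤ Fintype.card V) (hm : 2 ≤ m) :
    1 / 108 * Fintype.card V * Real.log (Fintype.card V * Real.log m) ≤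
      tauEnt (lampChain P m) (unif ((V → Fin m) × V)) (Real.exp 1)⁻¹ := by
  have : NeZero m := ⟨by omega⟩
  have hn : (3 : ℝ) ≤ Fintype.card V := by exact_mod_cast hcard
  have hP' : P ∈ doublyStochastic ℝ V :=
    mem_doublyStochastic_iff_mem_rowStochastic_and_mem_colStochastic.2
      ⟨hP, transpose_mem_rowStochastic_iff_mem_colStochastic.1 (hsymm.eq.symm ▸ hP)⟩
  set τ := tauEnt (lampChain P m) (unif ((V → Fin m) × V)) (Real.exp 1)⁻¹
  obtain ⟨j, hjτ, hτj⟩ :=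
    exists_nat_pow_near (one_le_tauEnt_lampChain hP' hprim hcard hm) one_lt_two
  obtain ⟨x, hx⟩ := exists_card_mul_exp_le_meanUnvisited hP' hsymm hcard (j + 1)
  have hent : relEnt ((lampChain P m ^ 2 ^ (j + 1)) (fun _ => 0, x)) (unif _) ≤ 1 / 2 :=
    (relEnt_pow_le_of_tauEnt_le (lampChain_mem_doublyStochastic hP') (lampChain_isPrimitive hprim)
      (inv_pos.2 (Real.exp_pos 1)) hτj.le _).trans (by linarith [inv_exp_one_lt])
  have hsq := (meanUnvisited_sq_div_le_relEnt hP hm 0 (2 ^ (j + 1)) x).trans hent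
  have hlog := (meanUnvisited_mul_log_sub_card_le_relEnt hP 0 (2 ^ (j + 1)) x).trans hent
  rw [div_le_iff₀ (by positivity)] at hsq
  have hT : (2 : ℝ) ^ (j + 1) ≤ 2 * τ := by
    rw [pow_succ']
    exact_mod_cast Nat.mul_le_mul_left 2 hjτ
  have := mul_log_le_of_mul_exp_neg_le (by linarith)
    (Real.log_pos (by exact_mod_cast hm : (1 : ℝ) < m)) (one_le_pow₀ one_le_two) hx
    (by linarith) (by linarith)
  linarith

end MainTheorem

/-- For the `m`-state lamplighter chain on the two-dimensional
torus with `n = k²` vertices, `τ_ent = Ω(n log(n log m))`: there is `c' > 0` with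
`τ_ent ≥ c' n log(n log m)`. -/
theorem lamplighter_torus_entropy_lower :
    ∃ c' : ℝ, 0 < c' ∧
      ∀ (k m : ℕ) [NeZero k], 2 ≤ k → 2 ≤ m →
        c' * ((k : ℝ) ^ 2) * Real.log (((k : ℝ) ^ 2) * Real.log m) ≤
          (tauEnt (lampChain (torusWalk k) m)
            (unif ((ZMod k × ZMod k → Fin m) × (ZMod k × ZMod k)))
            (Real.exp 1)⁻¹ : ℝ) := by
  refine ⟨1 / 108, by norm_num, fun k m _ hk hm => ?_⟩
  have hcard : Fintype.card (ZMod k × ZMod k) = k ^ 2 := by simp [sq]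
  simpa [hcard] using lamplighter_torus_entropy_lower_general (torusWalk_mem_rowStochastic k)
    (torusWalk_isSymm k) (torusWalk_isPrimitive k) (by rw [hcard]; nlinarith) hm

end Paper
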